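/- Let n ≥ 1, let A ∈ ℂ^{n×n} be positive-imaginary, and let 0 ≤ r ≤ n. Then the minimum of the largest canonical phase φ₁(E⁻¹AE⁻¹) over all sectorial matrices E ∈ ℂ^{n×n} such that prank(E) ≤ r and E⁻¹AE⁻¹ is positive-imaginary equals φ_{r+1}(A), and this minimum is attained at every Ê ∈ S_p(A,r). -/

import Mathlib

noncomputable section

open Matrix
open scoped Classical ComplexOrder

namespace LowPrank

variable {n : ℕ}

/-- A matrix is sectorial if its numerical range does not contain `0`
(`star x ⬝ᵥ x = 1` encodes `‖x‖₂ = 1`). -/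
def IsSectorial (A : Matrix (Fin n) (Fin n) ℂ) : Prop :=
  ∀ x : Fin n → ℂ, star x ⬝ᵥ x = 1 → star x ⬝ᵥ A.mulVec x ≠ 0

/-- The diagonal unitary matrix `diag (e^{iφ₁}, …, e^{iφₙ})`. -/
def phaseDiag (φ : Fin n → ℝ) : Matrix (Fin n) (Fin n) ℂ :=
  Matrix.diagonal fun k => Complex.exp (Complex.I * (φ k : ℂ))

/-- `A = Tᴴ diag (e^{iφ₁}, …, e^{iφₙ}) T` with `T` invertible. -/
def IsSectorialDecomp (A T : Matrix (Fin n) (Fin n) ℂ) (φ : Fin n → ℝ) : Prop :=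
  IsUnit T ∧ A = Tᴴ * phaseDiag φ * T

/-- `φ` is the (sorted, normalized) vector of canonical phases of `A`:
nonincreasing, spread `< π`, midpoint of the range in `(-π, π]`, and realizing a
sectorial decomposition of `A`. -/
def IsCanonicalPhases (A : Matrix (Fin n) (Fin n) ℂ) (φ : Fin n → ℝ) : Prop :=
  Antitone φ ∧ (∀ i j, φ i - φ j < Real.pi) ∧
    (-Real.pi < ((⨆ i, φ i) + ⨅ i, φ i) / 2) ∧ (((⨆ i, φ i) + ⨅ i, φ i) / 2 ≤ Real.pi) ∧
    ∃ T, IsSectorialDecomp A T φ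

/-- The canonical phases `φ₁(A) ≥ ⋯ ≥ φₙ(A)` of a sectorial matrix
(`phases A k` is the `(k+1)`-st largest canonical phase). -/
noncomputable def phases (A : Matrix (Fin n) (Fin n) ℂ) : Fin n → ℝ :=
  if h : ∃ φ, IsCanonicalPhases A φ then h.choose else 0

/-- The phase-rank: the number of nonzero canonical phases. -/
noncomputable def prank (A : Matrix (Fin n) (Fin n) ℂ) : ℕ :=
  {k : Fin n | phases A k ≠ 0}.ncard

/-- Positive-imaginary: sectorial with all canonical phases in `[0, π)`. -/
def PositiveImaginary (A : Matrix (Fin n) (Fin n) ℂ) : Prop :=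
  IsSectorial A ∧ ∀ k, phases A k ∈ Set.Ico 0 Real.pi

/-- Symmetric gauge function. -/
structure IsSymmetricGauge (Φ : (Fin n → ℝ) → ℝ) : Prop where
  pos : ∀ x, x ≠ 0 → 0 < Φ x
  smul : ∀ (ρ : ℝ) (x), Φ (ρ • x) = |ρ| * Φ x
  subadd : ∀ x y, Φ (x + y) ≤ Φ x + Φ y
  perm : ∀ (σ : Equiv.Perm (Fin n)) (x), Φ (x ∘ σ) = Φ x
  abs : ∀ x, Φ (fun k => |x k|) = Φ x

/-- The set `S_p(A, r)` of `r`-half-truncations of `A`. -/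
def Sp (A : Matrix (Fin n) (Fin n) ℂ) (r : ℕ) : Set (Matrix (Fin n) (Fin n) ℂ) :=
  {E | ∃ T, IsSectorialDecomp A T (phases A) ∧
    E = Tᴴ * Matrix.diagonal (fun k : Fin n =>
      if (k : ℕ) < r then Complex.exp (Complex.I * ((phases A k / 2 : ℝ) : ℂ)) else 1) * T}

lemma qf_decomp {A T : Matrix (Fin n) (Fin n) ℂ} {φ : Fin n → ℝ}
    (h : A = Tᴴ * phaseDiag φ * T) (x : Fin n → ℂ) :
    star x ⬝ᵥ A *ᵥ x = ∑ j, (Complex.normSq ((T *ᵥ x) j) : ℂ) *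
      Complex.exp (Complex.I * (φ j : ℂ)) := by
  have h1 : star x ⬝ᵥ A *ᵥ x = star (T *ᵥ x) ⬝ᵥ (phaseDiag φ *ᵥ (T *ᵥ x)) := by
    rw [h, star_mulVec, ← dotProduct_mulVec, mulVec_mulVec, mulVec_mulVec]
  rw [h1]
  simp only [dotProduct, phaseDiag, mulVec_diagonal, Pi.star_apply]
  refine Finset.sum_congr rfl fun j _ => ?_
  rw [Complex.normSq_eq_conj_mul_self]
  simp only [RCLike.star_def]
  ring

lemma qf_im {A T : Matrix (Fin n) (Fin n) ℂ} {φ : Fin n → ℝ}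
    (h : A = Tᴴ * phaseDiag φ * T) (x : Fin n → ℂ) (c : ℝ) :
    (Complex.exp (-(Complex.I * (c : ℂ))) * (star x ⬝ᵥ A *ᵥ x)).im =
      ∑ j, Complex.normSq ((T *ᵥ x) j) * Real.sin (φ j - c) := by
  rw [qf_decomp h, Finset.mul_sum, Complex.im_sum]
  refine Finset.sum_congr rfl fun j _ => ?_
  have : Complex.exp (-(Complex.I * (c : ℂ))) * ((Complex.normSq ((T *ᵥ x) j) : ℂ) *
      Complex.exp (Complex.I * (φ j : ℂ))) = (Complex.normSq ((T *ᵥ x) j) : ℂ) *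
      Complex.exp (((φ j - c : ℝ) : ℂ) * Complex.I) := by
    rw [mul_left_comm, ← Complex.exp_add]
    congr 2
    push_cast
    ring
  rw [this, Complex.im_ofReal_mul, Complex.exp_ofReal_mul_I_im]

lemma qf_re {A T : Matrix (Fin n) (Fin n) ℂ} {φ : Fin n → ℝ}
    (h : A = Tᴴ * phaseDiag φ * T) (x : Fin n → ℂ) :
    (star x ⬝ᵥ A *ᵥ x).re = ∑ j, Complex.normSq ((T *ᵥ x) j) * Real.cos (φ j) := by
  rw [qf_decomp h, Complex.re_sum]
  refine Finset.sum_congr rfl fun j _ => ?_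
  rw [mul_comm Complex.I, Complex.re_ofReal_mul, Complex.exp_ofReal_mul_I_re]

lemma mulVec_ne_zero {T : Matrix (Fin n) (Fin n) ℂ} (hT : IsUnit T) {x : Fin n → ℂ}
    (hx : x ≠ 0) : T *ᵥ x ≠ 0 := by
  intro h
  exact hx (mulVec_injective_of_isUnit hT (by simpa using h))

/-- Nonzero values of the form of a decomposition with phases in `[0, π)`. -/
lemma qf_upper {A T : Matrix (Fin n) (Fin n) ℂ} {φ : Fin n → ℝ} (hT : IsUnit T)
    (h : A = Tᴴ * phaseDiag φ * T) (hφ : ∀ k, φ k ∈ Set.Ico 0 Real.pi)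
    {x : Fin n → ℂ} (hx : x ≠ 0) :
    0 ≤ (star x ⬝ᵥ A *ᵥ x).im ∧
      ((star x ⬝ᵥ A *ᵥ x).im = 0 → 0 < (star x ⬝ᵥ A *ᵥ x).re) := by
  have him : (star x ⬝ᵥ A *ᵥ x).im = ∑ j, Complex.normSq ((T *ᵥ x) j) * Real.sin (φ j) := by
    simpa using qf_im h x 0
  have hterm : ∀ j ∈ Finset.univ, 0 ≤ Complex.normSq ((T *ᵥ x) j) * Real.sin (φ j) :=
    fun j _ => mul_nonneg (Complex.normSq_nonneg _)
      (Real.sin_nonneg_of_nonneg_of_le_pi (hφ j).1 (hφ j).2.le)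
  refine ⟨by rw [him]; exact Finset.sum_nonneg hterm, fun h0 => ?_⟩
  rw [him, Finset.sum_eq_zero_iff_of_nonneg hterm] at h0
  rw [qf_re h]
  have hre : ∀ j, Complex.normSq ((T *ᵥ x) j) * Real.cos (φ j) =
      Complex.normSq ((T *ᵥ x) j) := by
    intro j
    rcases mul_eq_zero.1 (h0 j (Finset.mem_univ j)) with h1 | h1
    · simp [h1]
    · have : φ j = 0 := by
        by_contra hne
        have := Real.sin_pos_of_pos_of_lt_pi (lt_of_le_of_ne (hφ j).1 (Ne.symm hne)) (hφ j).2
        linarith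
      simp [this]
  simp only [hre]
  obtain ⟨j, hj⟩ := Function.ne_iff.1 (mulVec_ne_zero hT hx)
  exact Finset.sum_pos' (fun j _ => Complex.normSq_nonneg _)
    ⟨j, Finset.mem_univ j, Complex.normSq_pos.2 hj⟩

lemma sectorial_of_decomp {A T : Matrix (Fin n) (Fin n) ℂ} {φ : Fin n → ℝ}
    (h : IsSectorialDecomp A T φ) (hφ : ∀ k, φ k ∈ Set.Ico 0 Real.pi) : IsSectorial A := by
  intro x hx h0
  have hx0 : x ≠ 0 := by
    rintro rfl
    simp at hx
  have := qf_upper h.1 h.2 hφ hx0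
  rw [h0] at this
  simp at this

/-- Fewer than `n` linear conditions have a nontrivial common solution. -/
lemma exists_common_kernel (T S : Matrix (Fin n) (Fin n) ℂ) (J K : Finset (Fin n))
    (hc : J.card + K.card < n) :
    ∃ x : Fin n → ℂ, x ≠ 0 ∧ (∀ j ∈ J, (T *ᵥ x) j = 0) ∧ ∀ k ∈ K, (S *ᵥ x) k = 0 := by
  let f : (Fin n → ℂ) →ₗ[ℂ] ((J ⊕ K) → ℂ) :=
    LinearMap.pi (Sum.elim (fun j => (LinearMap.proj j.1).comp T.mulVecLin)
      (fun k => (LinearMap.proj k.1).comp S.mulVecLin))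
  have hlt : Module.finrank ℂ ((J ⊕ K) → ℂ) < Module.finrank ℂ (Fin n → ℂ) := by
    simpa using hc
  have := LinearMap.ker_ne_bot_of_finrank_lt (f := f) hlt
  obtain ⟨x, hx, hx0⟩ := (Submodule.ne_bot_iff _).1 this
  refine ⟨x, hx0, fun j hj => ?_, fun k hk => ?_⟩
  · have := congrFun (LinearMap.mem_ker.1 hx) (Sum.inl ⟨j, hj⟩)
    simpa [f] using this
  · have := congrFun (LinearMap.mem_ker.1 hx) (Sum.inr ⟨k, hk⟩)
    simpa [f] using this

lemma phases_le_of_decomp {A T S : Matrix (Fin n) (Fin n) ℂ} {φ ψ : Fin n → ℝ}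
    (hT : IsUnit T) (h : A = Tᴴ * phaseDiag φ * T) (hS : A = Sᴴ * phaseDiag ψ * S)
    (hφa : Antitone φ) (hψa : Antitone ψ)
    (hφ : ∀ k, φ k ∈ Set.Ico 0 Real.pi) (hψ : ∀ k, ψ k ∈ Set.Ico 0 Real.pi) (k : Fin n) :
    φ k ≤ ψ k := by
  by_contra! hlt
  obtain ⟨x, hx0, hx1, hx2⟩ := exists_common_kernel T S (Finset.Ioi k) (Finset.Iio k) (by
    simp only [Fin.card_Ioi, Fin.card_Iio]; omega)
  have e1 := qf_im h x (ψ k)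
  have e2 := qf_im hS x (ψ k)
  rw [e1] at e2
  have hpos : 0 < ∑ j, Complex.normSq ((T *ᵥ x) j) * Real.sin (φ j - ψ k) := by
    have hs : ∀ j ≤ k, 0 < Real.sin (φ j - ψ k) := fun j hj => by
      have := hφa hj
      apply Real.sin_pos_of_pos_of_lt_pi
      · linarith
      · linarith [(hφ j).2, (hψ k).1]
    obtain ⟨j, hj⟩ := Function.ne_iff.1 (mulVec_ne_zero hT hx0)
    refine Finset.sum_pos' (fun j _ => ?_) ⟨j, Finset.mem_univ j, ?_⟩
    · rcases le_or_gt j k with hjk | hjk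
      · exact mul_nonneg (Complex.normSq_nonneg _) (hs j hjk).le
      · simp [hx1 j (Finset.mem_Ioi.2 hjk)]
    · have hjk : j ≤ k := by
        by_contra! hjk
        exact hj (by simpa using hx1 j (Finset.mem_Ioi.2 hjk))
      exact mul_pos (Complex.normSq_pos.2 hj) (hs j hjk)
  have hneg : ∑ j, Complex.normSq ((S *ᵥ x) j) * Real.sin (ψ j - ψ k) ≤ 0 := by
    refine Finset.sum_nonpos fun j _ => ?_
    rcases lt_or_ge j k with hjk | hjk
    · simp [hx2 j (Finset.mem_Iio.2 hjk)]
    · have := hψa hjk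
      refine mul_nonpos_of_nonneg_of_nonpos (Complex.normSq_nonneg _)
        (Real.sin_nonpos_of_nonpos_of_neg_pi_le (by linarith) ?_)
      linarith [(hψ j).1, (hψ k).2]
  linarith

lemma iSup_antitone (hn : 1 ≤ n) {φ : Fin n → ℝ} (h : Antitone φ) :
    (⨆ i, φ i) = φ ⟨0, hn⟩ := by
  have : Nonempty (Fin n) := ⟨⟨0, hn⟩⟩
  exact le_antisymm (ciSup_le fun i => h (Fin.mk_le_mk.2 (Nat.zero_le _)))
    (le_ciSup (Set.finite_range φ).bddAbove _)

lemma iInf_antitone (hn : 1 ≤ n) {φ : Fin n → ℝ} (h : Antitone φ) :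
    (⨅ i, φ i) = φ ⟨n - 1, by omega⟩ := by
  have : Nonempty (Fin n) := ⟨⟨0, hn⟩⟩
  exact le_antisymm (ciInf_le (Set.finite_range φ).bddBelow _)
    (le_ciInf fun i => h (Fin.mk_le_mk.2 (by omega)))

/-- A real number whose point on the circle has an argument in `[0, π)`. -/
lemma angle_upper {t : ℝ} (h1 : 0 ≤ Real.sin t) (h2 : Real.sin t = 0 → 0 < Real.cos t) :
    ∃ (k : ℤ) (s : ℝ), s ∈ Set.Ico 0 Real.pi ∧ t = s + k * (2 * Real.pi) := by
  have hp := Real.two_pi_pos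
  refine ⟨toIcoDiv hp 0 t, toIcoMod hp 0 t, ?_, ?_⟩
  · have hm := toIcoMod_mem_Ico hp 0 t
    have he : t = toIcoMod hp 0 t + toIcoDiv hp 0 t * (2 * Real.pi) := by
      have := toIcoMod_add_toIcoDiv_zsmul hp 0 t
      rw [zsmul_eq_mul] at this
      exact this.symm
    set s := toIcoMod hp 0 t
    have hsin : Real.sin t = Real.sin s := by rw [he, Real.sin_add_int_mul_two_pi]
    have hcos : Real.cos t = Real.cos s := by rw [he, Real.cos_add_int_mul_two_pi]
    rw [hsin] at h1 h2
    rw [hcos] at h2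
    refine ⟨hm.1, ?_⟩
    by_contra! hge
    rcases eq_or_lt_of_le hge with heq | hgt
    · rw [← heq] at h2
      have := h2 (by simp)
      simp at this
      linarith
    · have : 0 < Real.sin (s - Real.pi) :=
        Real.sin_pos_of_pos_of_lt_pi (by linarith) (by linarith [hm.2])
      rw [Real.sin_sub_pi] at this
      linarith
  · have := toIcoMod_add_toIcoDiv_zsmul hp 0 t
    rw [zsmul_eq_mul] at this
    exact this.symm

lemma canonical_of_upper (hn : 1 ≤ n) {A T : Matrix (Fin n) (Fin n) ℂ} {φ : Fin n → ℝ}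
    (h : IsSectorialDecomp A T φ) (ha : Antitone φ) (hφ : ∀ k, φ k ∈ Set.Ico 0 Real.pi) :
    IsCanonicalPhases A φ := by
  refine ⟨ha, fun i j => by linarith [(hφ i).2, (hφ j).1], ?_, ?_, T, h⟩
  · rw [iSup_antitone hn ha, iInf_antitone hn ha]
    linarith [(hφ ⟨0, hn⟩).1, (hφ ⟨n - 1, by omega⟩).1, Real.pi_pos]
  · rw [iSup_antitone hn ha, iInf_antitone hn ha]
    linarith [(hφ ⟨0, hn⟩).2, (hφ ⟨n - 1, by omega⟩).2, Real.pi_pos]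

/-- Uniqueness of the canonical phases in the positive-imaginary case. -/
lemma canonical_unique (hn : 1 ≤ n) {A T : Matrix (Fin n) (Fin n) ℂ} {φ ψ : Fin n → ℝ}
    (h : IsSectorialDecomp A T φ) (ha : Antitone φ) (hφ : ∀ k, φ k ∈ Set.Ico 0 Real.pi)
    (hψ : IsCanonicalPhases A ψ) : ψ = φ := by
  obtain ⟨hψa, hsp, hl, hu, S, hS, hAS⟩ := hψ
  rw [iSup_antitone hn hψa, iInf_antitone hn hψa] at hl hu
  have hval : ∀ j, ∃ (k : ℤ) (s : ℝ), s ∈ Set.Ico 0 Real.pi ∧ ψ j = s + k * (2 * Real.pi) := by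
    intro j
    have hSx : S *ᵥ (S⁻¹ *ᵥ Pi.single j 1) = Pi.single j 1 := by
      rw [mulVec_mulVec, Matrix.mul_nonsing_inv _ ((Matrix.isUnit_iff_isUnit_det _).1 hS),
        one_mulVec]
    set x := S⁻¹ *ᵥ (Pi.single j 1 : Fin n → ℂ) with hxdef
    have hx0 : x ≠ 0 := by
      intro hx
      rw [hx, mulVec_zero] at hSx
      have := congrFun hSx j
      simp at this
    have hq : star x ⬝ᵥ A *ᵥ x = Complex.exp ((ψ j : ℂ) * Complex.I) := by
      rw [qf_decomp hAS, hSx, Finset.sum_eq_single j]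
      · simp [mul_comm]
      · intro b _ hb
        simp [hb]
      · simp
    have := qf_upper h.1 h.2 hφ hx0
    rw [hq, Complex.exp_ofReal_mul_I_im, Complex.exp_ofReal_mul_I_re] at this
    exact angle_upper this.1 this.2
  choose k s hs hk using hval
  have hkz : ∀ j, k j = k ⟨0, hn⟩ := by
    have key : ∀ i j, k i ≤ k j := by
      intro i j
      by_contra! hlt
      have h1 : (k j : ℝ) + 1 ≤ k i := by exact_mod_cast hlt
      have := hsp i j
      rw [hk i, hk j] at this
      nlinarith [(hs i).1, (hs j).2, Real.pi_pos]
    exact fun j => le_antisymm (key _ _) (key _ _)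
  have hk0 : k ⟨0, hn⟩ = 0 := by
    rw [hk ⟨0, hn⟩, hk ⟨n - 1, by omega⟩, hkz ⟨n - 1, by omega⟩] at hl hu
    have a1 := (hs ⟨0, hn⟩)
    have a2 := (hs ⟨n - 1, by omega⟩)
    have hpi := Real.pi_pos
    by_contra hne
    rcases lt_or_gt_of_ne hne with hlt | hgt
    · have : (k ⟨0, hn⟩ : ℝ) ≤ -1 := by
        have : k ⟨0, hn⟩ ≤ -1 := by omega
        exact_mod_cast this
      nlinarith [a1.2, a2.2]
    · have : (1 : ℝ) ≤ k ⟨0, hn⟩ := by exact_mod_cast hgt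
      nlinarith [a1.1, a2.1]
  have hψ' : ∀ j, ψ j ∈ Set.Ico 0 Real.pi := by
    intro j
    have := hk j
    rw [hkz j, hk0] at this
    simp only [Int.cast_zero, zero_mul, add_zero] at this
    rw [this]
    exact hs j
  funext j
  exact le_antisymm (phases_le_of_decomp hS hAS h.2 hψa ha hψ' hφ j)
    (phases_le_of_decomp h.1 h.2 hAS ha hψa hφ hψ' j)

lemma phases_eq (hn : 1 ≤ n) {A T : Matrix (Fin n) (Fin n) ℂ} {φ : Fin n → ℝ}
    (h : IsSectorialDecomp A T φ) (ha : Antitone φ) (hφ : ∀ k, φ k ∈ Set.Ico 0 Real.pi) :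
    phases A = φ := by
  have hex : ∃ φ, IsCanonicalPhases A φ := ⟨φ, canonical_of_upper hn h ha hφ⟩
  unfold phases
  rw [dif_pos hex]
  exact canonical_unique hn h ha hφ hex.choose_spec

lemma exists_sorted {A T : Matrix (Fin n) (Fin n) ℂ} {φ : Fin n → ℝ}
    (h : IsSectorialDecomp A T φ) :
    ∃ (σ : Equiv.Perm (Fin n)) (S : Matrix (Fin n) (Fin n) ℂ),
      Antitone (φ ∘ σ) ∧ IsSectorialDecomp A S (φ ∘ σ) := by
  refine ⟨Tuple.sort (fun i => -φ i), T.submatrix (Tuple.sort (fun i => -φ i)) id, ?_, ?_, ?_⟩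
  · intro i j hij
    have := Tuple.monotone_sort (fun i => -φ i) hij
    simpa using this
  · have := (Matrix.isUnit_submatrix_equiv (A := T) (Tuple.sort (fun i => -φ i))
      (Equiv.refl _)).2 h.1
    simpa using this
  · rw [h.2]
    generalize Tuple.sort (fun i => -φ i) = σ
    have : phaseDiag (φ ∘ σ) = (phaseDiag φ).submatrix σ σ := by
      unfold phaseDiag
      rw [Matrix.submatrix_diagonal_equiv]
      rfl
    rw [this, Matrix.conjTranspose_submatrix, Matrix.submatrix_mul_equiv,
      Matrix.submatrix_mul_equiv]
    simp

lemma exists_unit_real (p q : ℂ) : ∃ (w : ℂ) (l : ℝ), star w * w = 1 ∧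
    w * p + star w * q = (l : ℂ) := by
  have key : ∃ w : ℂ, star w * w = 1 ∧ (w * (p - star q)).im = 0 := by
    by_cases hd : p - star q = 0
    · exact ⟨1, by simp, by rw [hd]; simp⟩
    · refine ⟨star (p - star q) / (‖p - star q‖ : ℂ), ?_, ?_⟩
      · have hne : (‖p - star q‖ : ℂ) ≠ 0 := by simpa using hd
        have h2 := Complex.mul_conj' (p - star q)
        generalize p - star q = d at *
        simp only [RCLike.star_def, map_div₀, Complex.conj_conj, Complex.conj_ofReal] at *
        field_simp
        exact h2
      · have h2 := Complex.conj_mul' (p - star q)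
        generalize p - star q = d at *
        simp only [RCLike.star_def] at *
        rw [div_mul_eq_mul_div, h2]
        norm_cast
  obtain ⟨w, hw, him⟩ := key
  refine ⟨w, (w * p + star w * q).re, hw, ?_⟩
  apply Complex.ext
  · simp
  · simp only [RCLike.star_def, Complex.add_im, Complex.mul_im, Complex.sub_re, Complex.sub_im,
      Complex.conj_re, Complex.conj_im, Complex.ofReal_im] at him ⊢
    linarith

lemma exists_isotropic (M : Matrix (Fin n) (Fin n) ℂ) {x y : Fin n → ℂ} (hx : x ≠ 0)
    (h : star x ⬝ᵥ M *ᵥ x + star y ⬝ᵥ M *ᵥ y = 0) :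
    ∃ z : Fin n → ℂ, z ≠ 0 ∧ star z ⬝ᵥ M *ᵥ z = 0 := by
  by_cases ha : star x ⬝ᵥ M *ᵥ x = 0
  · exact ⟨x, hx, ha⟩
  obtain ⟨w, l, hw, hl⟩ := exists_unit_real ((star x ⬝ᵥ M *ᵥ y) / (star x ⬝ᵥ M *ᵥ x))
    ((star y ⬝ᵥ M *ᵥ x) / (star x ⬝ᵥ M *ᵥ x))
  obtain ⟨s, hs⟩ : ∃ s : ℝ, s ^ 2 + l * s - 1 = 0 := by
    refine ⟨(-l + Real.sqrt (l ^ 2 + 4)) / 2, ?_⟩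
    have := Real.sq_sqrt (show 0 ≤ l ^ 2 + 4 by positivity)
    nlinarith
  have hs' : (s : ℂ) ^ 2 + l * s - 1 = 0 := by exact_mod_cast hs
  have hq : star ((s : ℂ) • x + w • y) ⬝ᵥ M *ᵥ ((s : ℂ) • x + w • y) =
      (s : ℂ) ^ 2 * (star x ⬝ᵥ M *ᵥ x) + (star w * w) * (star y ⬝ᵥ M *ᵥ y) +
        s * (w * (star x ⬝ᵥ M *ᵥ y) + star w * (star y ⬝ᵥ M *ᵥ x)) := by
    simp only [star_add, star_smul, mulVec_add, mulVec_smul, add_dotProduct, dotProduct_add,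
      smul_dotProduct, dotProduct_smul, smul_eq_mul, RCLike.star_def, Complex.conj_ofReal]
    ring
  refine ⟨(s : ℂ) • x + w • y, ?_, ?_⟩
  · intro h0
    have h1 : w • y = -((s : ℂ) • x) := by
      rw [eq_neg_iff_add_eq_zero, add_comm]
      exact h0
    have h2 : star (w • y) ⬝ᵥ M *ᵥ (w • y) = (star w * w) * (star y ⬝ᵥ M *ᵥ y) := by
      simp only [star_smul, mulVec_smul, smul_dotProduct, dotProduct_smul, smul_eq_mul]
      ring
    have h3 : star (-((s : ℂ) • x)) ⬝ᵥ M *ᵥ (-((s : ℂ) • x)) =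
        (s : ℂ) ^ 2 * (star x ⬝ᵥ M *ᵥ x) := by
      simp only [star_neg, star_smul, mulVec_neg, mulVec_smul, neg_dotProduct, dotProduct_neg,
        smul_dotProduct, dotProduct_smul, smul_eq_mul, RCLike.star_def, Complex.conj_ofReal]
      ring
    rw [h1, h3, hw] at h2
    have h4 : ((s : ℂ) ^ 2 + 1) * (star x ⬝ᵥ M *ᵥ x) = 0 := by linear_combination h2 + h
    rcases mul_eq_zero.1 h4 with h5 | h5
    · have : s ^ 2 + 1 = 0 := by exact_mod_cast h5
      nlinarith [sq_nonneg s]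
    · exact ha h5
  · rw [hq, hw]
    have hl' : w * (star x ⬝ᵥ M *ᵥ y) + star w * (star y ⬝ᵥ M *ᵥ x) =
        l * (star x ⬝ᵥ M *ᵥ x) := by
      rw [← hl]
      field_simp
    rw [hl']
    linear_combination h + (star x ⬝ᵥ M *ᵥ x) * hs'

lemma star_dot_eq_norm (x : EuclideanSpace ℂ (Fin n)) :
    star x.ofLp ⬝ᵥ x.ofLp = ((‖x‖ ^ 2 : ℝ) : ℂ) := by
  rw [EuclideanSpace.norm_sq_eq]
  simp [dotProduct, Complex.conj_mul']

/-- The numerical range. -/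
def numRange (A : Matrix (Fin n) (Fin n) ℂ) : Set ℂ :=
  (fun x : EuclideanSpace ℂ (Fin n) => star x.ofLp ⬝ᵥ A *ᵥ x.ofLp) '' Metric.sphere 0 1

lemma mem_numRange {A : Matrix (Fin n) (Fin n) ℂ} {x : Fin n → ℂ} (h : star x ⬝ᵥ x = 1) :
    star x ⬝ᵥ A *ᵥ x ∈ numRange A := by
  refine ⟨WithLp.toLp 2 x, ?_, rfl⟩
  have := star_dot_eq_norm (WithLp.toLp 2 x)
  rw [show (WithLp.toLp 2 x).ofLp = x from rfl, h] at this
  have h2 : ‖WithLp.toLp 2 x‖ ^ 2 = 1 := by exact_mod_cast this.symm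
  rw [mem_sphere_zero_iff_norm]
  nlinarith [norm_nonneg (WithLp.toLp 2 x)]

lemma mem_numRange_iff {A : Matrix (Fin n) (Fin n) ℂ} {c : ℂ} :
    c ∈ numRange A ↔ ∃ x : Fin n → ℂ, star x ⬝ᵥ x = 1 ∧ star x ⬝ᵥ A *ᵥ x = c := by
  constructor
  · rintro ⟨x, hx, rfl⟩
    refine ⟨x.ofLp, ?_, rfl⟩
    rw [star_dot_eq_norm, mem_sphere_zero_iff_norm.1 hx]
    simp
  · rintro ⟨x, hx, rfl⟩
    exact mem_numRange hx

lemma exists_normalize {x : Fin n → ℂ} (hx : x ≠ 0) :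
    ∃ (t : ℝ), 0 < t ∧ star ((t : ℂ) • x) ⬝ᵥ ((t : ℂ) • x) = 1 := by
  have h0 : 0 < ‖WithLp.toLp 2 x‖ := by simpa using hx
  refine ⟨‖WithLp.toLp 2 x‖⁻¹, by positivity, ?_⟩
  have := star_dot_eq_norm (WithLp.toLp 2 x)
  rw [show (WithLp.toLp 2 x).ofLp = x from rfl] at this
  simp only [star_smul, smul_dotProduct, dotProduct_smul, smul_eq_mul, RCLike.star_def,
    Complex.conj_ofReal, this]
  norm_cast
  field_simp

lemma qf_smul (A : Matrix (Fin n) (Fin n) ℂ) (t : ℝ) (x : Fin n → ℂ) :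
    star ((t : ℂ) • x) ⬝ᵥ A *ᵥ ((t : ℂ) • x) = (t : ℂ) ^ 2 * (star x ⬝ᵥ A *ᵥ x) := by
  simp only [star_smul, mulVec_smul, smul_dotProduct, dotProduct_smul, smul_eq_mul,
    RCLike.star_def, Complex.conj_ofReal]
  ring

lemma qf_sub_one (A : Matrix (Fin n) (Fin n) ℂ) (c : ℂ) (x : Fin n → ℂ) :
    star x ⬝ᵥ (A - c • (1 : Matrix (Fin n) (Fin n) ℂ)) *ᵥ x =
      star x ⬝ᵥ A *ᵥ x - c * (star x ⬝ᵥ x) := by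
  rw [sub_mulVec, dotProduct_sub, smul_mulVec, one_mulVec, dotProduct_smul, smul_eq_mul]

/-- The Toeplitz and Hausdorff theorem: the numerical range is convex. -/
lemma convex_numRange (A : Matrix (Fin n) (Fin n) ℂ) : Convex ℝ (numRange A) := by
  rw [convex_iff_forall_pos]
  intro a ha b hb s t hs ht hst
  obtain ⟨x, hx, rfl⟩ := mem_numRange_iff.1 ha
  obtain ⟨y, hy, rfl⟩ := mem_numRange_iff.1 hb
  set c := s • (star x ⬝ᵥ A *ᵥ x) + t • (star y ⬝ᵥ A *ᵥ y) with hc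
  have hstc : (s : ℂ) + t = 1 := by exact_mod_cast hst
  have hsq : ((Real.sqrt s : ℝ) : ℂ) ^ 2 = s := by exact_mod_cast Real.sq_sqrt hs.le
  have htq : ((Real.sqrt t : ℝ) : ℂ) ^ 2 = t := by exact_mod_cast Real.sq_sqrt ht.le
  have hx0 : ((Real.sqrt s : ℝ) : ℂ) • x ≠ 0 := by
    refine smul_ne_zero ?_ ?_
    · exact_mod_cast (Real.sqrt_pos.2 hs).ne'
    · rintro rfl
      simp at hx
  obtain ⟨z, hz, hz0⟩ := exists_isotropic (A - c • (1 : Matrix (Fin n) (Fin n) ℂ))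
    (y := ((Real.sqrt t : ℝ) : ℂ) • y) hx0 (by
      rw [qf_smul, qf_smul, qf_sub_one, qf_sub_one, hx, hy, hsq, htq]
      rw [hc, Complex.real_smul, Complex.real_smul]
      linear_combination (-(s * (star x ⬝ᵥ A *ᵥ x) + t * (star y ⬝ᵥ A *ᵥ y))) * hstc)
  obtain ⟨r, hr, hr1⟩ := exists_normalize hz
  refine mem_numRange_iff.2 ⟨(r : ℂ) • z, hr1, ?_⟩
  have h3 := qf_smul (A - c • (1 : Matrix (Fin n) (Fin n) ℂ)) r z
  rw [hz0, mul_zero, qf_sub_one, hr1] at h3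
  linear_combination h3

lemma isCompact_numRange (A : Matrix (Fin n) (Fin n) ℂ) : IsCompact (numRange A) := by
  apply (isCompact_sphere _ _).image
  simp only [dotProduct, mulVec, Pi.star_apply]
  fun_prop

lemma exists_direction {A : Matrix (Fin n) (Fin n) ℂ} (hA : IsSectorial A) :
    ∃ α : ℝ, ∀ x : Fin n → ℂ, x ≠ 0 →
      0 < (Complex.exp (-(Complex.I * α)) * (star x ⬝ᵥ A *ᵥ x)).re := by
  have h0 : (0 : ℂ) ∉ numRange A := by
    intro h
    obtain ⟨x, hx, h1⟩ := mem_numRange_iff.1 h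
    exact hA x hx h1
  obtain ⟨f, u, hu, hf⟩ := RCLike.geometric_hahn_banach_point_closed (𝕜 := ℂ)
    (convex_numRange A) (isCompact_numRange A).isClosed h0
  rw [map_zero, map_zero] at hu
  have hf1 : ∀ z : ℂ, f z = f 1 * z := fun z => by
    have := f.map_smul z 1
    simp only [smul_eq_mul, mul_one] at this
    rw [this, mul_comm]
  refine ⟨-(f 1).arg, fun x hx => ?_⟩
  obtain ⟨t, ht, ht1⟩ := exists_normalize hx
  have h2 := hu.trans (hf _ (mem_numRange (A := A) ht1))
  rw [qf_smul, hf1] at h2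
  have h3 : f 1 * ((t : ℂ) ^ 2 * (star x ⬝ᵥ A *ᵥ x)) = ((‖f 1‖ * t ^ 2 : ℝ) : ℂ) *
      (Complex.exp (-(Complex.I * ((-(f 1).arg : ℝ) : ℂ))) * (star x ⬝ᵥ A *ᵥ x)) := by
    conv_lhs => rw [← Complex.norm_mul_exp_arg_mul_I (f 1)]
    push_cast
    rw [show -(Complex.I * -((f 1).arg : ℂ)) = (f 1).arg * Complex.I by ring]
    ring
  rw [h3] at h2
  have h4 := h2
  rw [show ∀ z : ℂ, RCLike.re z = z.re from fun _ => rfl, Complex.re_ofReal_mul] at h4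
  exact pos_of_mul_pos_right h4 (by positivity)

/-- Simultaneous diagonalization: a matrix with positive definite Hermitian part is congruent to
`diag (1 + i λ)`. -/
lemma exists_congr_diag {A : Matrix (Fin n) (Fin n) ℂ}
    (h : ∀ x : Fin n → ℂ, x ≠ 0 → 0 < (star x ⬝ᵥ A *ᵥ x).re) :
    ∃ (T : Matrix (Fin n) (Fin n) ℂ) (l : Fin n → ℝ), IsUnit T ∧
      A = Tᴴ * Matrix.diagonal (fun j => 1 + Complex.I * (l j : ℂ)) * T := by
  set H : Matrix (Fin n) (Fin n) ℂ := (1 / 2 : ℂ) • (A + Aᴴ) with hH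
  set K : Matrix (Fin n) (Fin n) ℂ := (-Complex.I / 2 : ℂ) • (A - Aᴴ) with hK
  have hconj : ∀ x : Fin n → ℂ, star x ⬝ᵥ Aᴴ *ᵥ x = star (star x ⬝ᵥ A *ᵥ x) := by
    intro x
    rw [star_dotProduct, star_mulVec, dotProduct_mulVec, conjTranspose_conjTranspose]
  have hHherm : H.IsHermitian := by
    rw [Matrix.IsHermitian, hH, conjTranspose_smul, conjTranspose_add, conjTranspose_conjTranspose,
      add_comm]
    simp
  have hKherm : K.IsHermitian := by
    rw [Matrix.IsHermitian, hK, conjTranspose_smul, conjTranspose_sub, conjTranspose_conjTranspose,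
      ← neg_sub A, smul_neg, ← neg_smul]
    congr 1
    simp
    ring
  have hHpos : H.PosDef := by
    refine Matrix.PosDef.of_dotProduct_mulVec_pos hHherm fun x hx => ?_
    have h1 : star x ⬝ᵥ H *ᵥ x = (((star x ⬝ᵥ A *ᵥ x).re : ℝ) : ℂ) := by
      rw [hH, smul_mulVec, dotProduct_smul, add_mulVec, dotProduct_add, hconj,
        Complex.re_eq_add_conj, smul_eq_mul]
      simp only [RCLike.star_def]
      ring
    rw [h1]
    exact_mod_cast h x hx
  have hAHK : A = H + Complex.I • K := by
    rw [hH, hK, smul_smul]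
    have : Complex.I * (-Complex.I / 2) = 1 / 2 := by
      linear_combination (-1 / 2) * Complex.I_mul_I
    rw [this, ← smul_add, show A + Aᴴ + (A - Aᴴ) = (2 : ℂ) • A by rw [two_smul]; abel, smul_smul]
    norm_num
  obtain ⟨R, hR⟩ : ∃ R : Matrix (Fin n) (Fin n) ℂ, H = Rᴴ * R := by
    open scoped MatrixOrder in
    obtain ⟨R, hR⟩ := CStarAlgebra.nonneg_iff_eq_star_mul_self.1 hHpos.posSemidef.nonneg
    exact ⟨R, hR⟩
  have hRu : IsUnit R := by
    have := hHpos.isUnit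
    rw [hR, Matrix.isUnit_iff_isUnit_det, det_mul] at this
    rw [Matrix.isUnit_iff_isUnit_det]
    exact isUnit_of_mul_isUnit_right this
  have hRd := (Matrix.isUnit_iff_isUnit_det _).1 hRu
  have hLherm : ((R⁻¹)ᴴ * K * R⁻¹).IsHermitian := isHermitian_conjTranspose_mul_mul _ hKherm
  set L := (R⁻¹)ᴴ * K * R⁻¹ with hL
  have hKL : K = Rᴴ * L * R := by
    have e1 : Rᴴ * (R⁻¹)ᴴ = 1 := by
      rw [← conjTranspose_mul, Matrix.nonsing_inv_mul _ hRd, conjTranspose_one]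
    calc K = (Rᴴ * (R⁻¹)ᴴ) * K * (R⁻¹ * R) := by
          rw [e1, Matrix.nonsing_inv_mul _ hRd, one_mul, mul_one]
      _ = Rᴴ * L * R := by rw [hL]; simp only [Matrix.mul_assoc]
  have hspec := hLherm.spectral_theorem
  rw [Unitary.conjStarAlgAut_apply] at hspec
  set U : Matrix (Fin n) (Fin n) ℂ := (hLherm.eigenvectorUnitary : Matrix (Fin n) (Fin n) ℂ)
    with hU
  have hUU : U * Uᴴ = 1 := Unitary.coe_mul_star_self hLherm.eigenvectorUnitary
  have hUU' : Uᴴ * U = 1 := Unitary.coe_star_mul_self hLherm.eigenvectorUnitary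
  refine ⟨Uᴴ * R, hLherm.eigenvalues, ?_, ?_⟩
  · exact (IsUnit.of_mul_eq_one _ hUU').mul hRu
  · have hd : Matrix.diagonal (fun j => 1 + Complex.I * (hLherm.eigenvalues j : ℂ)) =
        (1 : Matrix (Fin n) (Fin n) ℂ) + Complex.I •
          Matrix.diagonal ((RCLike.ofReal : ℝ → ℂ) ∘ hLherm.eigenvalues) := by
      rw [← diagonal_one, ← diagonal_smul, diagonal_add]
      rfl
    have hspec' : L = U * Matrix.diagonal ((RCLike.ofReal : ℝ → ℂ) ∘ hLherm.eigenvalues) * Uᴴ := hspec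
    rw [hd, hAHK, hR, hKL]
    generalize Matrix.diagonal ((RCLike.ofReal : ℝ → ℂ) ∘ hLherm.eigenvalues) = D at *
    rw [hspec']
    rw [conjTranspose_mul, conjTranspose_conjTranspose, mul_add, add_mul, mul_one]
    congr 1
    · rw [Matrix.mul_assoc Rᴴ, ← Matrix.mul_assoc U, hUU, one_mul]
    · simp only [Matrix.mul_assoc, Matrix.mul_smul, Matrix.smul_mul]

lemma exists_decomp {A : Matrix (Fin n) (Fin n) ℂ} (hA : IsSectorial A) :
    ∃ (T : Matrix (Fin n) (Fin n) ℂ) (φ : Fin n → ℝ), IsSectorialDecomp A T φ ∧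
      ∀ i j, φ i - φ j < Real.pi := by
  obtain ⟨α, hα⟩ := exists_direction hA
  obtain ⟨T, l, hT, hAT⟩ := exists_congr_diag (A := Complex.exp (-(Complex.I * α)) • A) (by
    intro x hx
    rw [smul_mulVec, dotProduct_smul]
    exact hα x hx)
  have hpos : ∀ j, 0 < Real.sqrt (1 + l j ^ 2) := fun j => Real.sqrt_pos.2 (by positivity)
  refine ⟨Matrix.diagonal (fun j => ((Real.sqrt (Real.sqrt (1 + l j ^ 2)) : ℝ) : ℂ)) * T,
    fun j => α + Real.arctan (l j), ⟨?_, ?_⟩, ?_⟩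
  · refine IsUnit.mul ?_ hT
    rw [Matrix.isUnit_iff_isUnit_det, det_diagonal, isUnit_iff_ne_zero, Finset.prod_ne_zero_iff]
    intro j _
    exact_mod_cast (Real.sqrt_pos.2 (hpos j)).ne'
  · have h1 : A = Complex.exp (Complex.I * α) • (Complex.exp (-(Complex.I * α)) • A) := by
      rw [smul_smul, ← Complex.exp_add]
      simp
    rw [h1, hAT, conjTranspose_mul, diagonal_conjTranspose, ← Matrix.smul_mul, ← Matrix.mul_smul]
    have h2 : Complex.exp (Complex.I * α) •
        Matrix.diagonal (fun j => 1 + Complex.I * (l j : ℂ)) =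
        Matrix.diagonal (star fun j => ((Real.sqrt (Real.sqrt (1 + l j ^ 2)) : ℝ) : ℂ)) *
        phaseDiag (fun j => α + Real.arctan (l j)) *
        Matrix.diagonal (fun j => ((Real.sqrt (Real.sqrt (1 + l j ^ 2)) : ℝ) : ℂ)) := by
      unfold phaseDiag
      rw [diagonal_mul_diagonal, diagonal_mul_diagonal, ← diagonal_smul]
      congr 1
      funext j
      have h3 : ((Real.sqrt (Real.sqrt (1 + l j ^ 2)) : ℝ) : ℂ) *
          ((Real.sqrt (Real.sqrt (1 + l j ^ 2)) : ℝ) : ℂ) = (Real.sqrt (1 + l j ^ 2) : ℝ) := by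
        exact_mod_cast Real.mul_self_sqrt (hpos j).le
      have h4 : (1 + Complex.I * (l j : ℂ)) = (Real.sqrt (1 + l j ^ 2) : ℝ) *
          Complex.exp (Real.arctan (l j) * Complex.I) := by
        apply Complex.ext
        · rw [Complex.re_ofReal_mul, Complex.exp_ofReal_mul_I_re, Real.cos_arctan]
          have := (hpos j).ne'
          field_simp
          simp
        · rw [Complex.im_ofReal_mul, Complex.exp_ofReal_mul_I_im, Real.sin_arctan]
          have := (hpos j).ne'
          field_simp
          simp
      simp only [Pi.smul_apply, Pi.star_apply, smul_eq_mul, RCLike.star_def, Complex.conj_ofReal]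
      rw [h4, Complex.ofReal_add, mul_add, Complex.exp_add, ← h3,
        mul_comm (Real.arctan (l j) : ℂ) Complex.I]
      ring
    rw [h2]
    simp only [Matrix.mul_assoc]
  · intro i j
    linarith [Real.arctan_lt_pi_div_two (l i), Real.neg_pi_div_two_lt_arctan (l j)]

lemma exists_canonical (hn : 1 ≤ n) {A : Matrix (Fin n) (Fin n) ℂ} (hA : IsSectorial A) :
    ∃ φ, IsCanonicalPhases A φ := by
  obtain ⟨T, φ, h, hsp⟩ := exists_decomp hA
  obtain ⟨σ, S, ha, hS⟩ := exists_sorted h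
  set ψ := φ ∘ σ with hψ
  set m := (ψ ⟨0, hn⟩ + ψ ⟨n - 1, by omega⟩) / 2 with hm
  have hp := Real.two_pi_pos
  have h1 := toIocMod_mem_Ioc hp (-Real.pi) m
  have h2 := toIocMod_add_toIocDiv_zsmul hp (-Real.pi) m
  rw [zsmul_eq_mul] at h2
  set k := toIocDiv hp (-Real.pi) m
  have ha' : Antitone (fun j => ψ j - k * (2 * Real.pi)) := fun i j hij => by
    have := ha hij
    simp only
    linarith
  refine ⟨fun j => ψ j - k * (2 * Real.pi), ha', fun i j => ?_, ?_, ?_, S, hS.1, ?_⟩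
  · have := hsp (σ i) (σ j)
    simp only [hψ, Function.comp]
    linarith
  · rw [iSup_antitone hn ha', iInf_antitone hn ha']
    linarith [h1.1]
  · rw [iSup_antitone hn ha', iInf_antitone hn ha']
    linarith [h1.2]
  · have : phaseDiag (fun j => ψ j - k * (2 * Real.pi)) = phaseDiag ψ := by
      unfold phaseDiag
      congr 1
      funext j
      rw [Complex.exp_eq_exp_iff_exists_int]
      refine ⟨-k, ?_⟩
      push_cast
      ring
    rw [this]
    exact hS.2

lemma phases_spec (hn : 1 ≤ n) {A : Matrix (Fin n) (Fin n) ℂ} (hA : IsSectorial A) :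
    IsCanonicalPhases A (phases A) := by
  have hex := exists_canonical hn hA
  unfold phases
  rw [dif_pos hex]
  exact hex.choose_spec

/-- Lower bound. -/
lemma lower_bound (hn : 1 ≤ n) {A E : Matrix (Fin n) (Fin n) ℂ} (hA : PositiveImaginary A)
    {r : ℕ} (hr : r < n) (hE : IsSectorial E) (hEr : prank E ≤ r)
    (hB : PositiveImaginary (E⁻¹ * A * E⁻¹)) :
    phases A ⟨r, hr⟩ ≤ phases (E⁻¹ * A * E⁻¹) ⟨0, hn⟩ := by
  obtain ⟨hAa, -, -, -, T, hT, hAT⟩ := phases_spec hn hA.1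
  obtain ⟨-, -, -, -, S, hS, hES⟩ := phases_spec hn hE
  obtain ⟨hBa, -, -, -, V, hV, hBV⟩ := phases_spec hn hB.1
  have hφ := hA.2
  have hβ := hB.2
  unfold prank at hEr
  set φ := phases A
  set ε := phases E
  set B := E⁻¹ * A * E⁻¹ with hBdef
  set β := phases B
  have hEd : IsUnit E.det := by
    rw [hES, det_mul, det_mul, phaseDiag, det_diagonal, det_conjTranspose]
    have hSd := (Matrix.isUnit_iff_isUnit_det _).1 hS
    refine (hSd.star.mul ?_).mul hSd
    rw [isUnit_iff_ne_zero, Finset.prod_ne_zero_iff]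
    exact fun j _ => Complex.exp_ne_zero _
  have hAB : A = E * B * E := by
    rw [hBdef, Matrix.mul_assoc, Matrix.mul_assoc, Matrix.mul_assoc,
      Matrix.nonsing_inv_mul _ hEd, mul_one, ← Matrix.mul_assoc, Matrix.mul_nonsing_inv _ hEd,
      one_mul]
  by_contra! hlt
  obtain ⟨x, hx0, hx1, hx2⟩ := exists_common_kernel T S (Finset.Ioi ⟨r, hr⟩)
    (Finset.univ.filter fun k => ε k ≠ 0) (by
      have : (Finset.univ.filter fun k => ε k ≠ 0).card ≤ r := by
        rw [← Set.ncard_coe_finset]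
        simpa using hEr
      simp only [Fin.card_Ioi]
      omega)
  have hDx : ∀ k, (S *ᵥ x) k ≠ 0 → ε k = 0 := by
    intro k hk
    by_contra hne
    exact hk (hx2 k (by simpa using hne))
  have hD1 : phaseDiag ε *ᵥ (S *ᵥ x) = S *ᵥ x := by
    funext k
    rw [phaseDiag, mulVec_diagonal]
    by_cases hk : (S *ᵥ x) k = 0
    · rw [hk, mul_zero]
    · rw [hDx k hk]
      simp
  have hD2 : (phaseDiag ε)ᴴ *ᵥ (S *ᵥ x) = S *ᵥ x := by
    funext k
    rw [phaseDiag, diagonal_conjTranspose, mulVec_diagonal]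
    by_cases hk : (S *ᵥ x) k = 0
    · rw [hk, mul_zero]
    · rw [Pi.star_apply, hDx k hk]
      simp
  have hEx : Eᴴ *ᵥ x = E *ᵥ x := by
    rw [hES, conjTranspose_mul, conjTranspose_mul, conjTranspose_conjTranspose, ← mulVec_mulVec,
      ← mulVec_mulVec, ← mulVec_mulVec, ← mulVec_mulVec, hD1, hD2]
  have hqf : star x ⬝ᵥ A *ᵥ x = star (E *ᵥ x) ⬝ᵥ B *ᵥ (E *ᵥ x) := by
    conv_rhs => rw [← hEx, star_mulVec, conjTranspose_conjTranspose, hEx]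
    rw [← dotProduct_mulVec, mulVec_mulVec, mulVec_mulVec, ← hAB]
  have e1 := qf_im hAT x (β ⟨0, hn⟩)
  have e2 := qf_im hBV (E *ᵥ x) (β ⟨0, hn⟩)
  rw [← hqf, e1] at e2
  have hpos : 0 < ∑ j, Complex.normSq ((T *ᵥ x) j) * Real.sin (φ j - β ⟨0, hn⟩) := by
    have hs : ∀ j ≤ (⟨r, hr⟩ : Fin n), 0 < Real.sin (φ j - β ⟨0, hn⟩) := fun j hj => by
      have := hAa hj
      apply Real.sin_pos_of_pos_of_lt_pi
      · linarith
      · linarith [(hφ j).2, (hβ ⟨0, hn⟩).1]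
    obtain ⟨j, hj⟩ := Function.ne_iff.1 (mulVec_ne_zero hT hx0)
    refine Finset.sum_pos' (fun j _ => ?_) ⟨j, Finset.mem_univ j, ?_⟩
    · rcases le_or_gt j ⟨r, hr⟩ with hjk | hjk
      · exact mul_nonneg (Complex.normSq_nonneg _) (hs j hjk).le
      · simp [hx1 j (Finset.mem_Ioi.2 hjk)]
    · have hjk : j ≤ ⟨r, hr⟩ := by
        by_contra! hjk
        exact hj (by simpa using hx1 j (Finset.mem_Ioi.2 hjk))
      exact mul_pos (Complex.normSq_pos.2 hj) (hs j hjk)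
  have hneg : ∑ j, Complex.normSq ((V *ᵥ (E *ᵥ x)) j) * Real.sin (β j - β ⟨0, hn⟩) ≤ 0 := by
    refine Finset.sum_nonpos fun j _ => ?_
    have : β j ≤ β ⟨0, hn⟩ := hBa (Fin.mk_le_mk.2 (Nat.zero_le _))
    refine mul_nonpos_of_nonneg_of_nonpos (Complex.normSq_nonneg _)
      (Real.sin_nonpos_of_nonpos_of_neg_pi_le (by linarith) ?_)
    linarith [(hβ j).1, (hβ ⟨0, hn⟩).2]
  linarith

/-- Every half-truncation is feasible and attains the bound. -/
lemma attained (hn : 1 ≤ n) {A : Matrix (Fin n) (Fin n) ℂ} (hA : PositiveImaginary A)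
    (r : ℕ) (hr : r ≤ n) {E : Matrix (Fin n) (Fin n) ℂ} (hE : E ∈ Sp A r) :
    IsSectorial E ∧ prank E ≤ r ∧ PositiveImaginary (E⁻¹ * A * E⁻¹) ∧
      phases (E⁻¹ * A * E⁻¹) ⟨0, hn⟩ = if h : r < n then phases A ⟨r, h⟩ else 0 := by
  obtain ⟨T, ⟨hT, hAT⟩, hET⟩ := hE
  have hAa := (phases_spec hn hA.1).1
  have hφ := hA.2
  set φ := phases A with hφdef
  have hpi := Real.pi_pos
  let g : Fin n → ℝ := fun k => if (k : ℕ) < r then φ k / 2 else 0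
  let f : Fin n → ℝ := fun k => if (k : ℕ) < r then 0 else φ k
  have hEg : IsSectorialDecomp E T g := by
    refine ⟨hT, ?_⟩
    rw [hET]
    congr 2
    unfold phaseDiag
    congr 1
    funext k
    by_cases hk : (k : ℕ) < r <;> simp [g, hk]
  have hg : ∀ k, g k ∈ Set.Ico 0 Real.pi := by
    intro k
    have := hφ k
    by_cases hk : (k : ℕ) < r
    · simp only [g, hk, if_true]
      exact ⟨by linarith [this.1], by linarith [this.1, this.2]⟩
    · simp only [g, hk, if_false]
      exact ⟨le_rfl, hpi⟩
  have hga : Antitone g := by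
    intro i j hij
    have h1 := hAa hij
    have h2 : (i : ℕ) ≤ j := hij
    by_cases hj : (j : ℕ) < r
    · have hi : (i : ℕ) < r := by omega
      simp only [g, hi, hj, if_true]
      linarith
    · have : g j = 0 := by simp [g, hj]
      rw [this]
      exact (hg i).1
  have hpE : phases E = g := phases_eq hn hEg hga hg
  have hTd := (Matrix.isUnit_iff_isUnit_det _).1 hT
  have hTHd : IsUnit (Tᴴ).det := by
    rw [det_conjTranspose]
    exact hTd.star
  -- the compressed matrix
  have hEinv : E⁻¹ = T⁻¹ * phaseDiag (fun k => -g k) * (Tᴴ)⁻¹ := by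
    apply Matrix.inv_eq_right_inv
    rw [hEg.2]
    have e1 : phaseDiag g * phaseDiag (fun k => -g k) = 1 := by
      unfold phaseDiag
      rw [diagonal_mul_diagonal, ← diagonal_one]
      congr 1
      funext k
      rw [← Complex.exp_add]
      simp
    calc Tᴴ * phaseDiag g * T * (T⁻¹ * phaseDiag (fun k => -g k) * (Tᴴ)⁻¹)
        = Tᴴ * (phaseDiag g * ((T * T⁻¹) * phaseDiag (fun k => -g k))) * (Tᴴ)⁻¹ := by
          simp only [Matrix.mul_assoc]
      _ = 1 := by
          rw [Matrix.mul_nonsing_inv _ hTd, one_mul, e1, mul_one, Matrix.mul_nonsing_inv _ hTHd]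
  have hC : IsSectorialDecomp (E⁻¹ * A * E⁻¹) ((Tᴴ)⁻¹) f := by
    refine ⟨?_, ?_⟩
    · rw [Matrix.isUnit_nonsing_inv_iff, Matrix.isUnit_iff_isUnit_det]
      exact hTHd
    · have e2 : phaseDiag (fun k => -g k) * phaseDiag φ * phaseDiag (fun k => -g k) =
          phaseDiag f := by
        unfold phaseDiag
        rw [diagonal_mul_diagonal, diagonal_mul_diagonal]
        congr 1
        funext k
        rw [← Complex.exp_add, ← Complex.exp_add]
        congr 1
        by_cases hk : (k : ℕ) < r
        · simp only [g, f, hk, if_true]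
          push_cast
          ring
        · simp only [g, f, hk, if_false]
          push_cast
          ring
      rw [conjTranspose_nonsing_inv, conjTranspose_conjTranspose, ← e2, hEinv, hAT]
      calc T⁻¹ * phaseDiag (fun k => -g k) * (Tᴴ)⁻¹ * (Tᴴ * phaseDiag φ * T) *
            (T⁻¹ * phaseDiag (fun k => -g k) * (Tᴴ)⁻¹)
          = T⁻¹ * (phaseDiag (fun k => -g k) * (((Tᴴ)⁻¹ * Tᴴ) * (phaseDiag φ * ((T * T⁻¹) *
            phaseDiag (fun k => -g k))))) * (Tᴴ)⁻¹ := by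
            simp only [Matrix.mul_assoc]
        _ = _ := by
            rw [Matrix.mul_nonsing_inv _ hTd, Matrix.nonsing_inv_mul _ hTHd, one_mul, one_mul]
            simp only [Matrix.mul_assoc]
  have hf : ∀ k, f k ∈ Set.Ico 0 Real.pi := by
    intro k
    by_cases hk : (k : ℕ) < r
    · simp only [f, hk, if_true]
      exact ⟨le_rfl, hpi⟩
    · simp only [f, hk, if_false]
      exact hφ k
  obtain ⟨σ, S, hfa, hS⟩ := exists_sorted hC
  have hfσ : ∀ k, (f ∘ σ) k ∈ Set.Ico 0 Real.pi := fun k => hf (σ k)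
  have hpC : phases (E⁻¹ * A * E⁻¹) = f ∘ σ := phases_eq hn hS hfa hfσ
  refine ⟨sectorial_of_decomp hEg hg, ?_, ⟨sectorial_of_decomp hC hf, ?_⟩, ?_⟩
  · unfold prank
    rw [hpE]
    have hsub : {k : Fin n | g k ≠ 0} ⊆ Fin.castLE hr '' Set.univ := by
      intro k hk
      have hkr : (k : ℕ) < r := by
        by_contra hkr
        exact hk (by simp [g, hkr])
      exact ⟨⟨k, hkr⟩, trivial, rfl⟩
    refine (Set.ncard_le_ncard hsub (Set.toFinite _)).trans ((Set.ncard_image_le).trans ?_)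
    simp [Set.ncard_univ]
  · rw [hpC]
    exact hfσ
  · rw [hpC]
    split_ifs with h
    · apply le_antisymm
      · by_cases hk : (σ ⟨0, hn⟩ : ℕ) < r
        · simp only [Function.comp, f, hk, if_true]
          exact (hφ _).1
        · simp only [Function.comp, f, hk, if_false]
          exact hAa (show (⟨r, h⟩ : Fin n) ≤ σ ⟨0, hn⟩ from Fin.le_def.2 (not_lt.1 hk))
      · have h1 : (f ∘ σ) (σ.symm ⟨r, h⟩) ≤ (f ∘ σ) ⟨0, hn⟩ :=
          hfa (Fin.mk_le_mk.2 (Nat.zero_le _))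
        simpa [f] using h1
    · have : (σ ⟨0, hn⟩ : ℕ) < r := by omega
      simp [f, this]

/-- minimization of the largest canonical phase of `E⁻¹AE⁻¹`
(with the convention `φ_{n+1}(A) = 0`). -/
theorem low_prank_approximation_max_phase
    (hn : 1 ≤ n) (A : Matrix (Fin n) (Fin n) ℂ) (hA : PositiveImaginary A)
    (r : ℕ) (hr : r ≤ n) :
    IsLeast {v : ℝ | ∃ E : Matrix (Fin n) (Fin n) ℂ, IsSectorial E ∧ prank E ≤ r ∧
        PositiveImaginary (E⁻¹ * A * E⁻¹) ∧ v = phases (E⁻¹ * A * E⁻¹) ⟨0, hn⟩}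
      (if h : r < n then phases A ⟨r, h⟩ else 0) ∧
    ∀ E ∈ Sp A r, IsSectorial E ∧ prank E ≤ r ∧ PositiveImaginary (E⁻¹ * A * E⁻¹) ∧
      phases (E⁻¹ * A * E⁻¹) ⟨0, hn⟩ = if h : r < n then phases A ⟨r, h⟩ else 0 := by
  refine ⟨⟨?_, ?_⟩, fun E hE => attained hn hA r hr hE⟩
  · obtain ⟨-, -, -, -, T, hT⟩ := phases_spec hn hA.1
    obtain ⟨h1, h2, h3, h4⟩ := attained hn hA r hr ⟨T, hT, rfl⟩
    exact ⟨_, h1, h2, h3, h4.symm⟩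
  · rintro v ⟨E, hE, hEr, hB, rfl⟩
    split_ifs with h
    · exact lower_bound hn hA h hE hEr hB
    · exact (hB.2 _).1

end LowPrank
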